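/- Let f ∈ R := MvPolynomial ℂ (Fin 2) be squarefree. Then the quotient A ⧸ Ideal.span {ι f, ι(v_f)} is NOT a finite-dimensional ℂ-vector space if and only if either there exist a, b ∈ ℂ with (a,b) ≠ (0,0) such that a·X + b·Y divides f in R, or there exist a, b, c ∈ ℂ with a² + b² = c² such that (X − a)² + (Y − b)² − c² divides f in R. -/

import Mathlib

open MvPolynomial

noncomputable section

/-- Partial derivative with respect to the first variable `X`. -/
def dx (f : MvPolynomial (Fin 2) ℂ) : MvPolynomial (Fin 2) ℂ := pderiv 0 f

/-- Partial derivative with respect to the second variable `Y`. -/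
def dy (f : MvPolynomial (Fin 2) ℂ) : MvPolynomial (Fin 2) ℂ := pderiv 1 f

/-- The inflection polynomial `i_f = f_y²·f_xx − 2·f_x·f_y·f_xy + f_x²·f_yy`. -/
def infl (f : MvPolynomial (Fin 2) ℂ) : MvPolynomial (Fin 2) ℂ :=
  (dy f) ^ 2 * dx (dx f) - 2 * dx f * dy f * dy (dx f) + (dx f) ^ 2 * dy (dy f)

/-- The vertex polynomial
`v_f = (f_x² + f_y²)(f_x³ f_yyy − 3 f_x² f_y f_xyy + 3 f_x f_y² f_xxy − f_y³ f_xxx)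
      − 3((f_x² − f_y²) f_xy − f_x f_y (f_xx − f_yy)) · i_f`. -/
def vert (f : MvPolynomial (Fin 2) ℂ) : MvPolynomial (Fin 2) ℂ :=
  ((dx f) ^ 2 + (dy f) ^ 2) *
      ((dx f) ^ 3 * dy (dy (dy f)) - 3 * (dx f) ^ 2 * dy f * dy (dy (dx f)) +
        3 * dx f * (dy f) ^ 2 * dy (dx (dx f)) - (dy f) ^ 3 * dx (dx (dx f))) -
    3 * (((dx f) ^ 2 - (dy f) ^ 2) * dy (dx f) - dx f * dy f * (dx (dx f) - dy (dy f))) *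
      infl f

/-- The canonical map from polynomials to formal power series in two variables. -/
def ι : MvPolynomial (Fin 2) ℂ →+* MvPowerSeries (Fin 2) ℂ :=
  MvPolynomial.coeToMvPowerSeries.ringHom

/-- The local intersection number at the origin of the curves `g = 0` and `h = 0`:
the `ℂ`-dimension of `ℂ⟦x,y⟧/⟨g,h⟩`. -/
def interMult (g h : MvPolynomial (Fin 2) ℂ) : ℕ :=
  Module.finrank ℂ (MvPowerSeries (Fin 2) ℂ ⧸ Ideal.span {ι g, ι h})

end

/-!
Write `κ` for the curvature of the curve `p = 0`, `p` irreducible, parametrised by the flow of the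
Hamiltonian vector field `p_x ∂_y - p_y ∂_x`. The polynomials `infl p` and `vert p` are the
numerators of `κ` and of its derivative along the curve. The Hamiltonian vector field induces a
nonzero derivation of the function field of `p = 0`, which has transcendence degree one over `ℂ`, so
its field of constants is `ℂ`. If `p ∣ infl p`, the slope of the tangent line is a constant and the
curve is a line; if `p ∣ vert p` but `p ∤ infl p`, the centre of curvature and the squared radius
are constants and the curve is a circle.

Replacing `p` by `p * g` only reparametrises the curve `p = 0`, hence multiplies `vert p` by a power
of `g` modulo `p`. So, for squarefree `f`, an irreducible common factor `p` of `f` and `vert f`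
divides `vert p`. Finally, `ℂ⟦x, y⟧ ⧸ (f, g)` is infinite-dimensional exactly when `f` and `g` have
a common irreducible factor vanishing at the origin: otherwise every prime containing `(f, g)`
contracts to a maximal ideal of the polynomial ring, which is the ideal of the origin.
-/

noncomputable section

section LocalAlgebra

theorem maximalIdeal_le_radical_of_finite_quotient {k R : Type*} [Field k] [CommRing R]
    [IsLocalRing R] [Algebra k R] (I : Ideal R) [Module.Finite k (R ⧸ I)] :
    IsLocalRing.maximalIdeal R ≤ I.radical := by
  have : IsArtinianRing (R ⧸ I) := IsArtinianRing.of_finite k (R ⧸ I)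
  obtain ⟨n, hn⟩ := IsLocalRing.exists_maximalIdeal_pow_le_of_isArtinianRing_quotient I
  exact fun x hx ↦ ⟨n, hn (Ideal.pow_mem_pow hx n)⟩

theorem finite_quotient_of_maximalIdeal_le_radical {k R : Type*} [Field k] [CommRing R]
    [IsLocalRing R] [IsNoetherianRing R] [Algebra k R]
    [Module.Finite k (IsLocalRing.ResidueField R)] {I : Ideal R}
    (hI : IsLocalRing.maximalIdeal R ≤ I.radical) : Module.Finite k (R ⧸ I) := by
  by_cases htop : I = ⊤
  · subst htop
    infer_instance
  have hle : I ≤ IsLocalRing.maximalIdeal R := IsLocalRing.le_maximalIdeal htop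
  have : Module.Finite k (R ⧸ IsLocalRing.maximalIdeal R) :=
    inferInstanceAs (Module.Finite k (IsLocalRing.ResidueField R))
  refine Module.finite_of_surjective_of_ker_le_nilradical (Ideal.Quotient.factorₐ k hle)
    (Ideal.Quotient.factor_surjective hle) ?_ (IsNoetherian.noetherian _)
  intro x hx
  obtain ⟨r, rfl⟩ := Ideal.Quotient.mk_surjective x
  have hr : r ∈ IsLocalRing.maximalIdeal R := Ideal.Quotient.eq_zero_iff_mem.mp hx
  obtain ⟨n, hn⟩ := hI hr
  exact ⟨n, by rw [← map_pow]; exact Ideal.Quotient.eq_zero_iff_mem.mpr hn⟩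

end LocalAlgebra

section PowerSeries

variable {σ k : Type*} [Field k]

theorem mvPowerSeries_mem_maximalIdeal_iff {φ : MvPowerSeries σ k} :
    φ ∈ IsLocalRing.maximalIdeal (MvPowerSeries σ k) ↔ MvPowerSeries.constantCoeff φ = 0 := by
  rw [IsLocalRing.mem_maximalIdeal, mem_nonunits_iff, MvPowerSeries.isUnit_iff_constantCoeff,
    isUnit_iff_ne_zero, not_not]

instance finite_residueField_mvPowerSeries :
    Module.Finite k (IsLocalRing.ResidueField (MvPowerSeries σ k)) := by
  refine Module.Finite.of_surjective (Algebra.linearMap k _) fun x ↦ ?_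
  obtain ⟨φ, rfl⟩ := IsLocalRing.residue_surjective x
  refine ⟨MvPowerSeries.constantCoeff φ, ?_⟩
  have hsub : MvPowerSeries.C (MvPowerSeries.constantCoeff φ) - φ
      ∈ IsLocalRing.maximalIdeal (MvPowerSeries σ k) := by
    rw [mvPowerSeries_mem_maximalIdeal_iff, map_sub, MvPowerSeries.constantCoeff_C, sub_self]
  exact (Ideal.Quotient.mk_eq_mk_iff_sub_mem _ _).mpr hsub

theorem coe_mem_maximalIdeal_iff {q : MvPolynomial σ k} :
    (q : MvPowerSeries σ k) ∈ IsLocalRing.maximalIdeal (MvPowerSeries σ k) ↔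
      constantCoeff q = 0 := by
  rw [mvPowerSeries_mem_maximalIdeal_iff, ← MvPowerSeries.coeff_zero_eq_constantCoeff_apply,
    coeff_coe, constantCoeff_eq]

theorem mem_span_X_image_of_coeff_eq_zero {R : Type*} [CommRing R] (s : Finset σ)
    (φ : MvPowerSeries σ R) (hφ : ∀ m : σ →₀ ℕ, (∀ i ∈ s, m i = 0) → MvPowerSeries.coeff m φ = 0) :
    φ ∈ Ideal.span (MvPowerSeries.X '' (s : Set σ)) := by
  classical
  induction s using Finset.induction_on generalizing φ with
  | empty =>
    rw [show φ = 0 from MvPowerSeries.ext fun m ↦ hφ m (by simp)]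
    exact zero_mem _
  | insert i s _ ih =>
    let ψ : MvPowerSeries σ R := fun m ↦ if m i = 0 then MvPowerSeries.coeff m φ else 0
    have coeff_ψ (m : σ →₀ ℕ) : MvPowerSeries.coeff m ψ =
        if m i = 0 then MvPowerSeries.coeff m φ else 0 := rfl
    have hψ : ψ ∈ Ideal.span (MvPowerSeries.X '' (s : Set σ)) := by
      refine ih ψ fun m hm ↦ ?_
      rw [coeff_ψ, ite_eq_right_iff]
      exact fun hi ↦ hφ m (Finset.forall_mem_insert _ _ _ |>.mpr ⟨hi, hm⟩)
    have hdvd : MvPowerSeries.X i ∣ φ - ψ :=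
      MvPowerSeries.X_dvd_iff.mpr fun m hm ↦ by rw [map_sub, coeff_ψ, if_pos hm, sub_self]
    rw [Finset.coe_insert, Set.image_insert_eq, Ideal.mem_span_insert]
    obtain ⟨q, hq⟩ := hdvd
    exact ⟨q, ψ, hψ, by rw [mul_comm, ← hq, sub_add_cancel]⟩

theorem maximalIdeal_mvPowerSeries_le_of_forall_X_mem [Finite σ] {I : Ideal (MvPowerSeries σ k)}
    (hI : ∀ i, MvPowerSeries.X i ∈ I) : IsLocalRing.maximalIdeal (MvPowerSeries σ k) ≤ I := by
  have := Fintype.ofFinite σ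
  intro φ hφ
  rw [mvPowerSeries_mem_maximalIdeal_iff] at hφ
  have hspan := mem_span_X_image_of_coeff_eq_zero Finset.univ φ fun m hm ↦ by
    rwa [show m = 0 from Finsupp.ext fun i ↦ hm i (Finset.mem_univ i),
      MvPowerSeries.coeff_zero_eq_constantCoeff_apply]
  exact Ideal.span_le.mpr (Set.image_subset_iff.mpr fun i _ ↦ hI i) hspan

theorem X_dvd_iff_killCompl_eq_zero {R : Type*} [CommSemiring R] {i : σ} {φ : MvPowerSeries σ R} :
    MvPowerSeries.X i ∣ φ ↔
      MvPowerSeries.killCompl (Function.Embedding.subtype (· ≠ i)) φ = 0 := by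
  refine ⟨?_, fun h ↦ MvPowerSeries.X_dvd_iff.mpr fun m hm ↦ ?_⟩
  · rintro ⟨q, rfl⟩
    rw [map_mul, MvPowerSeries.killCompl_X_eq_zero (by simp), zero_mul]
  · obtain ⟨n, rfl⟩ : m ∈ Set.range (Finsupp.embDomain (Function.Embedding.subtype (· ≠ i))) := by
      rw [Finsupp.mem_range_embDomain_iff]
      rintro j hj
      refine ⟨⟨j, ?_⟩, rfl⟩
      rintro rfl
      exact Finsupp.mem_support_iff.mp hj hm
    rw [← MvPowerSeries.coeff_killCompl, h, map_zero]

theorem prime_X_mvPowerSeries {R : Type*} [CommRing R] [IsDomain R] (i : σ) :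
    Prime (MvPowerSeries.X i : MvPowerSeries σ R) := by
  refine ⟨fun h ↦ one_ne_zero (α := R) ?_, fun h ↦ not_isUnit_zero (M₀ := R) ?_, fun φ ψ h ↦ ?_⟩
  · rw [← MvPowerSeries.coeff_index_single_self_X (R := R) i, h, map_zero]
  · rw [← MvPowerSeries.constantCoeff_X (R := R) i]
    exact h.map _
  · simpa only [X_dvd_iff_killCompl_eq_zero, map_mul, mul_eq_zero] using h

theorem not_finite_quotient_span_singleton_mvPowerSeries [Nontrivial σ] {φ : MvPowerSeries σ k}
    (hφ : MvPowerSeries.constantCoeff φ = 0) :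
    ¬ Module.Finite k (MvPowerSeries σ k ⧸ Ideal.span {φ}) := by
  intro hfin
  have dvd_X_pow (i : σ) : ∃ n, φ ∣ MvPowerSeries.X i ^ n := by
    have hX : MvPowerSeries.X i ∈ (Ideal.span {φ}).radical :=
      maximalIdeal_le_radical_of_finite_quotient (k := k) _
        (mvPowerSeries_mem_maximalIdeal_iff.mpr (MvPowerSeries.constantCoeff_X i))
    obtain ⟨n, hn⟩ := hX
    exact ⟨n, Ideal.mem_span_singleton.mp hn⟩
  obtain ⟨i, j, hij⟩ := exists_pair_ne σ
  obtain ⟨m, hm⟩ := dvd_X_pow i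
  obtain ⟨n, hn⟩ := dvd_X_pow j
  obtain ⟨l, -, hl⟩ := (dvd_prime_pow (prime_X_mvPowerSeries i) m).mp hm
  have hl0 : l ≠ 0 := by
    rintro rfl
    rw [pow_zero, associated_one_iff_isUnit, MvPowerSeries.isUnit_iff_constantCoeff, hφ] at hl
    exact not_isUnit_zero hl
  have hXX : MvPowerSeries.X i ∣ (MvPowerSeries.X j : MvPowerSeries σ k) :=
    (prime_X_mvPowerSeries i).dvd_of_dvd_pow
      ((dvd_pow_self _ hl0).trans (hl.symm.dvd.trans hn))
  have hcoeff := MvPowerSeries.X_dvd_iff.mp hXX (Finsupp.single j 1) (by simp [hij.symm])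
  rw [MvPowerSeries.coeff_index_single_self_X] at hcoeff
  exact one_ne_zero hcoeff

theorem not_finite_quotient_span_pair_of_dvd [Nontrivial σ] {L f g : MvPolynomial σ k}
    (hL : constantCoeff L = 0) (hf : L ∣ f) (hg : L ∣ g) :
    ¬ Module.Finite k
      (MvPowerSeries σ k ⧸ Ideal.span {(f : MvPowerSeries σ k), (g : MvPowerSeries σ k)}) := by
  have hle : Ideal.span {(f : MvPowerSeries σ k), (g : MvPowerSeries σ k)} ≤
      Ideal.span {(L : MvPowerSeries σ k)} := by
    rw [Ideal.span_le, Set.insert_subset_iff, Set.singleton_subset_iff]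
    exact ⟨Ideal.mem_span_singleton.mpr (map_dvd coeToMvPowerSeries.ringHom hf),
      Ideal.mem_span_singleton.mpr (map_dvd coeToMvPowerSeries.ringHom hg)⟩
  intro hfin
  refine not_finite_quotient_span_singleton_mvPowerSeries (φ := (L : MvPowerSeries σ k)) ?_
    (Module.Finite.of_surjective (Ideal.Quotient.factorₐ k hle).toLinearMap
      (Ideal.Quotient.factor_surjective hle))
  exact mvPowerSeries_mem_maximalIdeal_iff.mp (coe_mem_maximalIdeal_iff.mpr hL)

end PowerSeries

section PlaneCurves

variable {k : Type*} [Field k]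

theorem krullDimLE_quotient_span_singleton {n : ℕ} {p : MvPolynomial (Fin (n + 1)) k}
    (hp : p ≠ 0) : Ring.KrullDimLE n (MvPolynomial (Fin (n + 1)) k ⧸ Ideal.span {p}) := by
  have hdim := ringKrullDim_quotient_succ_le_of_nonZeroDivisor (mem_nonZeroDivisors_of_ne_zero hp)
  rw [MvPolynomial.ringKrullDim_of_isNoetherianRing, ringKrullDim_eq_zero_of_field, zero_add,
    Nat.card_eq_fintype_card, Fintype.card_fin, Nat.cast_succ] at hdim
  rw [Ring.krullDimLE_iff]
  exact ENat.WithBot.add_le_add_one_right_iff.mp hdim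

theorem isMaximal_of_isPrime_of_not_dvd {p g : MvPolynomial (Fin 2) k} (hp : Irreducible p)
    (hpg : ¬ p ∣ g) {Q : Ideal (MvPolynomial (Fin 2) k)} [Q.IsPrime] (hpQ : p ∈ Q)
    (hgQ : g ∈ Q) : Q.IsMaximal := by
  have : (Ideal.span {p}).IsPrime := (Ideal.span_singleton_prime hp.ne_zero).mpr hp.prime
  have := krullDimLE_quotient_span_singleton hp.ne_zero
  have hle : RingHom.ker (Ideal.Quotient.mk (Ideal.span {p})) ≤ Q := by
    rwa [Ideal.mk_ker, Ideal.span_singleton_le_iff_mem]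
  have hprime : (Q.map (Ideal.Quotient.mk (Ideal.span {p}))).IsPrime :=
    Ideal.map_isPrime_of_surjective Ideal.Quotient.mk_surjective hle
  have hne : Q.map (Ideal.Quotient.mk (Ideal.span {p})) ≠ ⊥ := by
    intro hbot
    have hg0 := Ideal.mem_map_of_mem (Ideal.Quotient.mk (Ideal.span {p})) hgQ
    rw [hbot, Ideal.mem_bot, Ideal.Quotient.eq_zero_iff_dvd] at hg0
    exact hpg hg0
  have hmax := hprime.isMaximal_of_ne_bot hne
  have hcomap := Ideal.comap_isMaximal_of_surjective (Ideal.Quotient.mk (Ideal.span {p}))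
    Ideal.Quotient.mk_surjective (K := Q.map (Ideal.Quotient.mk (Ideal.span {p})))
  rwa [Ideal.comap_map_of_surjective' _ Ideal.Quotient.mk_surjective, sup_eq_left.mpr hle] at hcomap

theorem exists_irreducible_dvd_of_not_finite_quotient {f g : MvPolynomial (Fin 2) k} (hf : f ≠ 0)
    (hfin : ¬ Module.Finite k (MvPowerSeries (Fin 2) k ⧸
      Ideal.span {(f : MvPowerSeries (Fin 2) k), (g : MvPowerSeries (Fin 2) k)})) :
    ∃ p, Irreducible p ∧ constantCoeff p = 0 ∧ p ∣ f ∧ p ∣ g := by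
  contrapose! hfin
  refine finite_quotient_of_maximalIdeal_le_radical ?_
  rw [Ideal.radical_eq_sInf]
  refine le_sInf fun P ⟨hspan, hP⟩ ↦ maximalIdeal_mvPowerSeries_le_of_forall_X_mem fun i ↦ ?_
  let toSeries : MvPolynomial (Fin 2) k →+* MvPowerSeries (Fin 2) k := coeToMvPowerSeries.ringHom
  have hle : P.comap toSeries ≤ (IsLocalRing.maximalIdeal _).comap toSeries :=
    Ideal.comap_mono (IsLocalRing.le_maximalIdeal hP.ne_top)
  have hfP : f ∈ P.comap toSeries := hspan (Ideal.subset_span (Set.mem_insert _ _))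
  have hgP : g ∈ P.comap toSeries := hspan (Ideal.subset_span (Set.mem_insert_of_mem _ rfl))
  obtain ⟨p, hpfac, hpP⟩ : ∃ p ∈ UniqueFactorizationMonoid.factors f, p ∈ P.comap toSeries := by
    refine (Ideal.IsPrime.multiset_prod_mem_iff_exists_mem inferInstance _).mp ?_
    exact (Ideal.mem_iff_of_associated (UniqueFactorizationMonoid.factors_prod hf)).mpr hfP
  have hp := UniqueFactorizationMonoid.irreducible_of_factor p hpfac
  have hpg : ¬ p ∣ g := hfin p hp (coe_mem_maximalIdeal_iff.mp (hle hpP))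
    (UniqueFactorizationMonoid.dvd_of_mem_factors hpfac)
  have hmax := isMaximal_of_isPrime_of_not_dvd hp hpg hpP hgP
  have hX : X i ∈ P.comap toSeries := by
    rw [hmax.eq_of_le (Ideal.IsPrime.ne_top inferInstance) hle]
    exact coe_mem_maximalIdeal_iff.mpr (constantCoeff_X k i)
  rwa [Ideal.mem_comap, coeToMvPowerSeries.ringHom_apply, coe_X] at hX

end PlaneCurves

section Constants

/-- The field of constants of a derivation `D` of a field extension `K / k`. -/
def constantField {k K : Type*} [Field k] [Field K] [Algebra k K] (D : Derivation k K K) :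
    IntermediateField k K where
  carrier := {w | D w = 0}
  mul_mem' {v w} hv hw := by
    rw [Set.mem_ofPred_eq] at hv hw ⊢
    rw [D.leibniz, hv, hw, smul_zero, smul_zero, add_zero]
  add_mem' {v w} hv hw := by
    rw [Set.mem_ofPred_eq] at hv hw ⊢
    rw [map_add, hv, hw, add_zero]
  algebraMap_mem' := D.map_algebraMap
  inv_mem' w hw := by
    rw [Set.mem_ofPred_eq] at hw ⊢
    rw [D.leibniz_inv, hw, smul_zero]

variable {k K : Type*} [Field k] [Field K] [Algebra k K] {D : Derivation k K K}

theorem mem_constantField_iff {w : K} : w ∈ constantField D ↔ D w = 0 :=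
  Iff.rfl

theorem not_isAlgebraic_constantField [CharZero k] (hD : D ≠ 0) :
    ¬ Algebra.IsAlgebraic (constantField D) K := by
  intro halg
  have : CharZero (constantField D) := charZero_of_injective_algebraMap (algebraMap k _).injective
  have := Algebra.FormallyUnramified.of_isSeparable (constantField D) K
  let D' : Derivation (constantField D) K K := Derivation.mk'
    { toFun := D
      map_add' := map_add D
      map_smul' := fun c w ↦ by
        have hc : D (algebraMap (constantField D) K c) = 0 := mem_constantField_iff.mp c.2
        rw [Algebra.smul_def, D.leibniz, hc, smul_zero, add_zero, algebraMap_smul,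
          RingHom.id_apply] }
    D.leibniz
  refine hD (Derivation.ext fun w ↦ ?_)
  calc D w = D'.liftKaehlerDifferential (KaehlerDifferential.D _ K w) :=
        (D'.liftKaehlerDifferential_comp_D w).symm
    _ = 0 := by rw [Subsingleton.elim (KaehlerDifferential.D _ K w) 0, map_zero]

theorem isAlgebraic_constantField [CharZero k] (hK : Algebra.trdeg k K ≤ 1) (hD : D ≠ 0) :
    Algebra.IsAlgebraic k (constantField D) := by
  have hpos : 1 ≤ Algebra.trdeg (constantField D) K :=
    Cardinal.one_le_iff_ne_zero.mpr (mt trdeg_eq_zero_iff.mp (not_isAlgebraic_constantField hD))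
  rw [← trdeg_eq_zero_iff]
  by_contra hne
  have htwo : (1 : Cardinal) + 1 ≤ 1 :=
    calc (1 : Cardinal) + 1
      _ ≤ Algebra.trdeg k (constantField D) + Algebra.trdeg (constantField D) K :=
          add_le_add (Cardinal.one_le_iff_ne_zero.mpr hne) hpos
      _ = Algebra.trdeg k K := trdeg_add_eq k (constantField D)
      _ ≤ 1 := hK
  rw [one_add_one_eq_two] at htwo
  exact Cardinal.one_lt_two.not_ge htwo

theorem constantField_eq_bot [IsAlgClosed k] [CharZero k] (hK : Algebra.trdeg k K ≤ 1)
    (hD : D ≠ 0) : constantField D = ⊥ :=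
  have := isAlgebraic_constantField hK hD
  IntermediateField.eq_bot_of_isAlgClosed_of_isAlgebraic _

end Constants

section FunctionField

theorem trdeg_fractionRing {k A : Type*} [Field k] [CommRing A] [IsDomain A] [Algebra k A] :
    Algebra.trdeg k (FractionRing A) = Algebra.trdeg k A := by
  have : Algebra.IsAlgebraic A (FractionRing A) := IsLocalization.isAlgebraic _ (nonZeroDivisors A)
  rw [← trdeg_add_eq k A, trdeg_eq_zero_iff.mpr this, add_zero]

theorem trdeg_quotient_lt {σ k : Type*} [Finite σ] [Field k] {I : Ideal (MvPolynomial σ k)}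
    [I.IsPrime] (hI : I ≠ ⊥) : Algebra.trdeg k (MvPolynomial σ k ⧸ I) < Nat.card σ := by
  by_contra! hle
  let x : σ → MvPolynomial σ k ⧸ I := fun i ↦ Ideal.Quotient.mkₐ k I (X i)
  have aeval_x : aeval x = Ideal.Quotient.mkₐ k I := algHom_ext fun i ↦ aeval_X x i
  have adjoin_x : Algebra.adjoin k (Set.range x) = ⊤ := by
    rw [Algebra.adjoin_range_eq_range_aeval, aeval_x]
    exact (AlgHom.range_eq_top _).mpr (Ideal.Quotient.mkₐ_surjective k I)
  have : Algebra.IsAlgebraic (Algebra.adjoin k (Set.range x)) (MvPolynomial σ k ⧸ I) := by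
    rw [adjoin_x]
    exact ⟨fun b ↦ isAlgebraic_algebraMap (⟨b, trivial⟩ : (⊤ : Subalgebra k _))⟩
  have hx : IsTranscendenceBasis k x := by
    refine Algebra.IsAlgebraic.isTranscendenceBasis_of_lift_le_trdeg_of_finite k x ?_
    rwa [← Nat.cast_card, Cardinal.lift_natCast, Cardinal.nat_le_lift_iff]
  refine hI ((Submodule.eq_bot_iff I).mpr fun p hp ↦ ?_)
  refine (injective_iff_map_eq_zero (aeval (R := k) x)).mp hx.1 p ?_
  rw [aeval_x]
  exact Ideal.Quotient.eq_zero_iff_mem.mpr hp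

/-- The derivation of `A ⧸ I` induced by a derivation of `A` preserving the ideal `I`. -/
def quotientDerivation {k A : Type*} [CommRing k] [CommRing A] [Algebra k A] {I : Ideal A}
    (d : Derivation k A A) (hd : ∀ a ∈ I, d a ∈ I) : Derivation k (A ⧸ I) (A ⧸ I) :=
  Derivation.mk'
    ((I.restrictScalars k).mapQ (I.restrictScalars k) (d : A →ₗ[k] A) hd :
      (A ⧸ I) →ₗ[k] (A ⧸ I)) <| by
    rintro ⟨a⟩ ⟨b⟩
    exact congrArg (Ideal.Quotient.mk I) (d.leibniz a b)

theorem quotientDerivation_mk {k A : Type*} [CommRing k] [CommRing A] [Algebra k A] {I : Ideal A}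
    (d : Derivation k A A) (hd : ∀ a ∈ I, d a ∈ I) (a : A) :
    quotientDerivation d hd (Ideal.Quotient.mk I a) = Ideal.Quotient.mk I (d a) :=
  rfl

theorem exists_derivation_extending_of_formallyEtale {k A B : Type*} [CommRing k] [CommRing A]
    [CommRing B] [Algebra k A] [Algebra k B] [Algebra A B] [IsScalarTower k A B]
    [Algebra.FormallyEtale A B] (d : Derivation k A A) :
    ∃ D : Derivation k B B, ∀ a, D (algebraMap A B a) = algebraMap A B (d a) := by
  let toB : Ω[A⁄k] →ₗ[A] B := Algebra.linearMap A B ∘ₗ d.liftKaehlerDifferential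
  let D : Derivation k B B :=
    (toB.liftBaseChange B ∘ₗ
      (KaehlerDifferential.tensorKaehlerEquivOfFormallyEtale k A B).symm.toLinearMap).compDer
        (KaehlerDifferential.D k B)
  refine ⟨D, fun a ↦ ?_⟩
  calc D (algebraMap A B a) = toB.liftBaseChange B (1 ⊗ₜ KaehlerDifferential.D k A a) :=
        congrArg _ (KaehlerDifferential.tensorKaehlerEquivOfFormallyEtale_symm_D_algebraMap k A B a)
    _ = algebraMap A B (d a) := by
        rw [LinearMap.liftBaseChange_tmul, one_smul]
        exact congrArg _ (d.liftKaehlerDifferential_comp_D a)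

theorem exists_derivation_fractionRing_quotient {k A : Type*} [CommRing k] [CommRing A]
    [Algebra k A] {I : Ideal A} (d : Derivation k A A) (hd : ∀ a ∈ I, d a ∈ I) :
    ∃ D : Derivation k (FractionRing (A ⧸ I)) (FractionRing (A ⧸ I)),
      ∀ a, D (algebraMap A _ a) = algebraMap A _ (d a) := by
  have : Algebra.FormallyEtale (A ⧸ I) (FractionRing (A ⧸ I)) :=
    Algebra.FormallyEtale.of_isLocalization (nonZeroDivisors (A ⧸ I))
  obtain ⟨D, hD⟩ := exists_derivation_extending_of_formallyEtale (B := FractionRing (A ⧸ I))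
    (quotientDerivation d hd)
  exact ⟨D, fun a ↦ hD (Ideal.Quotient.mk I a)⟩

theorem algebraMap_fractionRing_quotient_eq_zero_iff {A : Type*} [CommRing A] {I : Ideal A}
    {a : A} : algebraMap A (FractionRing (A ⧸ I)) a = 0 ↔ a ∈ I := by
  rw [IsScalarTower.algebraMap_apply A (A ⧸ I), FaithfulSMul.algebraMap_eq_zero_iff,
    Ideal.Quotient.algebraMap_eq, Ideal.Quotient.eq_zero_iff_mem]

end FunctionField

section Curvature

/-- The numerator `x' y'' - x'' y'` of the curvature of the parametrised curve `(x, y)`, where the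
derivation `d` plays the role of differentiation along the curve. -/
def curvatureNumerator {k A : Type*} [CommRing k] [CommRing A] [Algebra k A]
    (d : Derivation k A A) (x y : A) : A :=
  d x * d (d y) - d (d x) * d y

/-- The numerator of the derivative of the curvature
`(x' y'' - x'' y') / (x' ^ 2 + y' ^ 2) ^ (3 / 2)` of the parametrised curve `(x, y)`. -/
def curvatureDerivNumerator {k A : Type*} [CommRing k] [CommRing A] [Algebra k A]
    (d : Derivation k A A) (x y : A) : A :=
  (d x ^ 2 + d y ^ 2) * d (curvatureNumerator d x y) -
    3 * (d x * d (d x) + d y * d (d y)) * curvatureNumerator d x y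

variable {k A B : Type*} [CommRing k] [CommRing A] [CommRing B] [Algebra k A] [Algebra k B]
  {d : Derivation k A A} {D : Derivation k B B} {φ : A →+* B}

theorem map_curvatureNumerator (hφ : ∀ a, D (φ a) = φ (d a)) (x y : A) :
    φ (curvatureNumerator d x y) = curvatureNumerator D (φ x) (φ y) := by
  simp only [curvatureNumerator, map_sub, map_mul, hφ]

theorem map_curvatureDerivNumerator (hφ : ∀ a, D (φ a) = φ (d a)) (x y : A) :
    φ (curvatureDerivNumerator d x y) = curvatureDerivNumerator D (φ x) (φ y) := by
  simp only [curvatureDerivNumerator, ← map_curvatureNumerator hφ, map_sub, map_mul, map_add,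
    map_pow, map_ofNat, hφ]

theorem curvatureNumerator_smul (g x y : A) :
    curvatureNumerator (g • d) x y = g ^ 3 * curvatureNumerator d x y := by
  simp only [curvatureNumerator, Derivation.smul_apply, smul_eq_mul, d.leibniz]
  ring

-- Constancy of the curvature does not depend on the parametrisation.
theorem curvatureDerivNumerator_smul (g x y : A) :
    curvatureDerivNumerator (g • d) x y = g ^ 6 * curvatureDerivNumerator d x y := by
  rw [curvatureDerivNumerator, curvatureNumerator_smul, curvatureDerivNumerator]
  simp only [curvatureNumerator, Derivation.smul_apply, smul_eq_mul, d.leibniz, d.leibniz_pow,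
    nsmul_eq_mul, Nat.cast_ofNat, Nat.add_one_sub_one]
  ring

end Curvature

section PlaneCurvesOfConstantCurvature

variable {k K : Type*} [Field k] [Field K] [Algebra k K] {D : Derivation k K K} {x y : K}

theorem exists_algebraMap_eq_of_constantField_eq_bot (hD : constantField D = ⊥) {w : K}
    (hw : D w = 0) : ∃ c : k, algebraMap k K c = w := by
  rwa [← mem_constantField_iff, hD, IntermediateField.mem_bot] at hw

theorem exists_linear_relation_of_curvatureNumerator_eq_zero (hD : constantField D = ⊥)
    (hxy : curvatureNumerator D x y = 0) :
    ∃ a b c : k, (a, b) ≠ (0, 0) ∧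
      algebraMap k K a * x + algebraMap k K b * y = algebraMap k K c := by
  by_cases hx : D x = 0
  · obtain ⟨c, hc⟩ := exists_algebraMap_eq_of_constantField_eq_bot hD hx
    exact ⟨1, 0, c, by simp, by rw [map_one, map_zero, one_mul, zero_mul, add_zero, hc]⟩
  have slope_const : D (D y / D x) = 0 := by
    rw [D.leibniz_div]
    simp only [curvatureNumerator, smul_eq_mul] at hxy ⊢
    linear_combination (D x ^ 2)⁻¹ * hxy
  obtain ⟨m, hm⟩ := exists_algebraMap_eq_of_constantField_eq_bot hD slope_const
  have intercept_const : D (y - algebraMap k K m * x) = 0 := by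
    rw [map_sub, D.leibniz, D.map_algebraMap, smul_zero, add_zero, smul_eq_mul, hm,
      div_mul_cancel₀ _ hx, sub_self]
  obtain ⟨c, hc⟩ := exists_algebraMap_eq_of_constantField_eq_bot hD intercept_const
  refine ⟨-m, 1, c, by simp, ?_⟩
  rw [hc, map_neg, map_one]
  ring

-- The centre of curvature is `(x - u * D y, y + u * D x)` with
-- `u = (D x ^ 2 + D y ^ 2) / curvatureNumerator D x y`.
theorem exists_constant_centre_of_curvatureDerivNumerator_eq_zero
    (hκ : curvatureNumerator D x y ≠ 0) (hxy : curvatureDerivNumerator D x y = 0) :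
    ∃ u, D (x - u * D y) = 0 ∧ D (y + u * D x) = 0 := by
  rw [curvatureDerivNumerator] at hxy
  have hκ_eq : curvatureNumerator D x y = D x * D (D y) - D (D x) * D y := rfl
  set κ := curvatureNumerator D x y
  obtain ⟨u, hu⟩ : ∃ u, u * κ = D x ^ 2 + D y ^ 2 := ⟨_, div_mul_cancel₀ _ hκ⟩
  have u_mul_deriv_κ : u * D κ = 3 * (D x * D (D x) + D y * D (D y)) := by
    apply mul_right_cancel₀ hκ
    linear_combination hxy + D κ * hu
  have deriv_u_mul_κ : D u * κ = -(D x * D (D x) + D y * D (D y)) := by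
    have hDu := congrArg D hu
    simp only [D.leibniz, D.leibniz_pow, map_add, smul_eq_mul, nsmul_eq_mul, Nat.cast_ofNat,
      Nat.add_one_sub_one, pow_one] at hDu
    linear_combination hDu - u_mul_deriv_κ
  refine ⟨u, mul_right_cancel₀ hκ ?_, mul_right_cancel₀ hκ ?_⟩ <;>
    simp only [map_sub, map_add, D.leibniz, smul_eq_mul]
  · linear_combination D x * hκ_eq - D (D y) * hu - D y * deriv_u_mul_κ
  · linear_combination D y * hκ_eq + D (D x) * hu + D x * deriv_u_mul_κ

theorem exists_circle_relation_of_curvatureDerivNumerator_eq_zero (hD : constantField D = ⊥)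
    (hκ : curvatureNumerator D x y ≠ 0) (hxy : curvatureDerivNumerator D x y = 0) :
    ∃ a b r : k, (x - algebraMap k K a) ^ 2 + (y - algebraMap k K b) ^ 2 = algebraMap k K r := by
  obtain ⟨u, hcentre_x, hcentre_y⟩ :=
    exists_constant_centre_of_curvatureDerivNumerator_eq_zero hκ hxy
  obtain ⟨a, ha⟩ := exists_algebraMap_eq_of_constantField_eq_bot hD hcentre_x
  obtain ⟨b, hb⟩ := exists_algebraMap_eq_of_constantField_eq_bot hD hcentre_y
  have radius_const : D ((x - algebraMap k K a) ^ 2 + (y - algebraMap k K b) ^ 2) = 0 := by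
    simp only [map_add, map_sub, D.leibniz_pow, D.map_algebraMap, smul_eq_mul, nsmul_eq_mul]
    rw [ha, hb]
    ring
  obtain ⟨r, hr⟩ := exists_algebraMap_eq_of_constantField_eq_bot hD radius_const
  exact ⟨a, b, r, hr.symm⟩

end PlaneCurvesOfConstantCurvature

section Hamiltonian

theorem pderiv_comm {σ R : Type*} [CommSemiring R] (i j : σ) (p : MvPolynomial σ R) :
    pderiv i (pderiv j p) = pderiv j (pderiv i p) := by
  obtain rfl | hij := eq_or_ne i j
  · rfl
  · ext m
    simp only [coeff_pderiv, Finsupp.add_apply, Finsupp.single_eq_of_ne hij,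
      Finsupp.single_eq_of_ne hij.symm, add_right_comm m, add_zero, mul_right_comm]

variable {k : Type*} [CommRing k]

/-- The Hamiltonian vector field `p_x ∂_y - p_y ∂_x` of `p`, which is tangent to the level curves
of `p`. -/
def hamiltonian (p : MvPolynomial (Fin 2) k) :
    Derivation k (MvPolynomial (Fin 2) k) (MvPolynomial (Fin 2) k) :=
  pderiv 0 p • pderiv 1 - pderiv 1 p • pderiv 0

theorem hamiltonian_apply (p q : MvPolynomial (Fin 2) k) :
    hamiltonian p q = pderiv 0 p * pderiv 1 q - pderiv 1 p * pderiv 0 q :=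
  rfl

theorem hamiltonian_X_zero (p : MvPolynomial (Fin 2) k) : hamiltonian p (X 0) = -pderiv 1 p := by
  simp [hamiltonian_apply]

theorem hamiltonian_X_one (p : MvPolynomial (Fin 2) k) : hamiltonian p (X 1) = pderiv 0 p := by
  simp [hamiltonian_apply]

theorem hamiltonian_self (p : MvPolynomial (Fin 2) k) : hamiltonian p p = 0 := by
  rw [hamiltonian_apply]
  ring

theorem hamiltonian_mul (p g q : MvPolynomial (Fin 2) k) :
    hamiltonian (p * g) q = g * hamiltonian p q + p * hamiltonian g q := by
  simp only [hamiltonian_apply, pderiv_mul]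
  ring

theorem hamiltonian_mem_span_singleton (p : MvPolynomial (Fin 2) k) :
    ∀ q ∈ Ideal.span {p}, hamiltonian p q ∈ Ideal.span {p} := by
  intro q hq
  obtain ⟨r, rfl⟩ := Ideal.mem_span_singleton.mp hq
  rw [Derivation.leibniz, hamiltonian_self, smul_zero, add_zero]
  exact Ideal.mul_mem_right _ _ (Ideal.mem_span_singleton_self p)

end Hamiltonian

section VertexPolynomial

theorem ι_apply (f : MvPolynomial (Fin 2) ℂ) : ι f = (f : MvPowerSeries (Fin 2) ℂ) :=
  rfl

theorem infl_eq_curvatureNumerator (p : MvPolynomial (Fin 2) ℂ) :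
    infl p = curvatureNumerator (hamiltonian p) (X 0) (X 1) := by
  simp only [infl, dx, dy, curvatureNumerator, hamiltonian_X_zero, hamiltonian_X_one]
  simp only [hamiltonian_apply, map_neg, pderiv_comm (0 : Fin 2) 1]
  ring

theorem vert_eq_curvatureDerivNumerator (p : MvPolynomial (Fin 2) ℂ) :
    vert p = curvatureDerivNumerator (hamiltonian p) (X 0) (X 1) := by
  simp only [vert, infl_eq_curvatureNumerator, curvatureDerivNumerator, curvatureNumerator, dx, dy,
    hamiltonian_X_zero, hamiltonian_X_one]
  simp only [hamiltonian_apply, map_neg, map_sub, pderiv_mul, pderiv_comm (0 : Fin 2) 1]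
  ring

theorem dvd_vert_mul_sub (p g : MvPolynomial (Fin 2) ℂ) :
    p ∣ vert (p * g) - g ^ 6 * vert p := by
  let Q := quotientDerivation (hamiltonian p) (hamiltonian_mem_span_singleton p)
  have hQ (q : MvPolynomial (Fin 2) ℂ) :
      (Ideal.Quotient.mk (Ideal.span {p}) g • Q) (Ideal.Quotient.mk _ q) =
        Ideal.Quotient.mk _ (hamiltonian (p * g) q) := by
    rw [Derivation.smul_apply, quotientDerivation_mk, hamiltonian_mul, map_add, map_mul, map_mul,
      Ideal.Quotient.mk_singleton_self, zero_mul, add_zero, smul_eq_mul]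
  rw [← Ideal.mem_span_singleton, ← Ideal.Quotient.mk_eq_mk_iff_sub_mem, map_mul, map_pow,
    vert_eq_curvatureDerivNumerator, vert_eq_curvatureDerivNumerator,
    map_curvatureDerivNumerator hQ, curvatureDerivNumerator_smul,
    map_curvatureDerivNumerator (quotientDerivation_mk _ _)]

theorem dvd_vert_of_dvd {L f : MvPolynomial (Fin 2) ℂ} (hL : L ∣ f) (hvert : vert L = 0) :
    L ∣ vert f := by
  obtain ⟨g, rfl⟩ := hL
  simpa only [hvert, mul_zero, sub_zero] using dvd_vert_mul_sub L g

theorem dvd_vert_self_of_dvd_vert {p f : MvPolynomial (Fin 2) ℂ} (hf : Squarefree f)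
    (hp : Irreducible p) (hpf : p ∣ f) (hpv : p ∣ vert f) : p ∣ vert p := by
  obtain ⟨g, rfl⟩ := hpf
  have hpg : ¬ p ∣ g := fun h ↦ hp.not_isUnit (hf p (mul_dvd_mul_left p h))
  have hmul : p ∣ g ^ 6 * vert p := (dvd_sub_right hpv).mp (dvd_vert_mul_sub p g)
  exact (hp.prime.dvd_or_dvd hmul).resolve_left fun h ↦ hpg (hp.prime.dvd_of_dvd_pow h)

theorem vert_line (a b : ℂ) : vert (C a * X 0 + C b * X 1) = 0 := by
  simp [vert_eq_curvatureDerivNumerator, curvatureDerivNumerator, curvatureNumerator,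
    hamiltonian_X_zero, hamiltonian_X_one]

theorem vert_circle (a b r : ℂ) : vert ((X 0 - C a) ^ 2 + (X 1 - C b) ^ 2 - C r) = 0 := by
  set p : MvPolynomial (Fin 2) ℂ := (X 0 - C a) ^ 2 + (X 1 - C b) ^ 2 - C r with hp
  have hx : hamiltonian p (X 0) = -(2 * (X 1 - C b)) := by
    simp [hamiltonian_X_zero, hp]
  have hy : hamiltonian p (X 1) = 2 * (X 0 - C a) := by
    simp [hamiltonian_X_one, hp]
  have hconst (c : ℂ) : hamiltonian p (C c) = 0 := derivation_C _ c
  have hnum (n : ℕ) [n.AtLeastTwo] : hamiltonian p ofNat(n) = 0 := (hamiltonian p).map_natCast n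
  have hκ : curvatureNumerator (hamiltonian p) (X 0) (X 1) = 8 * (p + C r) := by
    simp only [curvatureNumerator, hx, hy, map_neg, map_sub, Derivation.leibniz, hconst, hnum,
      smul_eq_mul]
    ring
  rw [vert_eq_curvatureDerivNumerator, curvatureDerivNumerator, hκ]
  simp only [hx, hy, map_neg, map_sub, map_add, Derivation.leibniz, hconst, hnum, smul_eq_mul,
    hamiltonian_self]
  ring

end VertexPolynomial

section TotalDegree

theorem totalDegree_pderiv_lt {σ R : Type*} [CommSemiring R] {i : σ} {p : MvPolynomial σ R}
    (hp : pderiv i p ≠ 0) : (pderiv i p).totalDegree < p.totalDegree := by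
  obtain ⟨m, hm, hdeg⟩ := Finset.exists_mem_eq_sup _ (support_nonempty.mpr hp) Finsupp.degree
  have hm' : m + Finsupp.single i 1 ∈ p.support := by
    rw [mem_support_iff, coeff_pderiv] at hm
    exact mem_support_iff.mpr (left_ne_zero_of_mul hm)
  calc (pderiv i p).totalDegree
    _ = m.degree := hdeg
    _ < m.degree + 1 := Nat.lt_succ_self _
    _ = (m + Finsupp.single i 1).degree := by rw [map_add, Finsupp.degree_single]
    _ ≤ p.totalDegree := le_totalDegree hm'

theorem pderiv_pderiv_eq_zero_of_totalDegree_le_one {σ R : Type*} [CommSemiring R]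
    {p : MvPolynomial σ R} (hp : p.totalDegree ≤ 1) (i j : σ) : pderiv i (pderiv j p) = 0 := by
  by_contra hij
  have hj : pderiv j p ≠ 0 := fun h ↦ hij (by rw [h, map_zero])
  have hij_lt := totalDegree_pderiv_lt hij
  have hj_lt := totalDegree_pderiv_lt hj
  lia

theorem pderiv_eq_zero_of_dvd_pderiv {σ R : Type*} [CommRing R] [IsDomain R] {i : σ}
    {p : MvPolynomial σ R} (hp : p ∣ pderiv i p) : pderiv i p = 0 := by
  by_contra hne
  exact (totalDegree_pderiv_lt hne).not_ge (totalDegree_le_of_dvd_of_isDomain hp hne)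

theorem eq_C_of_forall_pderiv_eq_zero {σ R : Type*} [CommRing R] [IsAddTorsionFree R]
    {p : MvPolynomial σ R} (hp : ∀ i, pderiv i p = 0) : p = C (constantCoeff p) := by
  refine coe_injective σ R (MvPowerSeries.pderiv.ext (fun i ↦ ?_) ?_)
  · rw [MvPowerSeries.pderiv_coe, hp, coe_zero, coe_C, MvPowerSeries.pderiv_C]
  · rw [coe_C, MvPowerSeries.constantCoeff_C]
    rfl

theorem isUnit_of_totalDegree_eq_zero {σ k : Type*} [Field k] {p : MvPolynomial σ k}
    (hp : p ≠ 0) (hdeg : p.totalDegree = 0) : IsUnit p := by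
  have hC : p = C (coeff 0 p) := totalDegree_eq_zero_iff_eq_C.mp hdeg
  have hne : coeff 0 p ≠ 0 := fun h0 ↦ hp (by rw [hC, h0, C_0])
  exact isUnit_iff_eq_C_of_isReduced.mpr ⟨_, hne.isUnit, hC⟩

theorem exists_not_dvd_pderiv {σ k : Type*} [Field k] [CharZero k] {p : MvPolynomial σ k}
    (hp : Irreducible p) : ∃ i, ¬ p ∣ pderiv i p := by
  by_contra! hdvd
  have hC := eq_C_of_forall_pderiv_eq_zero fun i ↦ pderiv_eq_zero_of_dvd_pderiv (hdvd i)
  exact hp.not_isUnit (isUnit_of_totalDegree_eq_zero hp.ne_zero (by rw [hC, totalDegree_C]))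

theorem dvd_of_dvd_of_totalDegree_le {σ k : Type*} [Field k] {p q : MvPolynomial σ k}
    (hpq : p ∣ q) (hq : q ≠ 0) (hdeg : q.totalDegree ≤ p.totalDegree) : q ∣ p := by
  obtain ⟨g, rfl⟩ := hpq
  have hg := right_ne_zero_of_mul hq
  rw [totalDegree_mul_of_isDomain (left_ne_zero_of_mul hq) hg] at hdeg
  exact (isUnit_of_totalDegree_eq_zero hg (by lia)).mul_right_dvd.mpr dvd_rfl

end TotalDegree

section IrreducibleCurves

variable {k : Type*} [Field k] {p : MvPolynomial (Fin 2) k}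

/-- The field of rational functions on the plane curve `p = 0`; it is a field when `p` is
irreducible. -/
abbrev CurveFunctionField (p : MvPolynomial (Fin 2) k) : Type _ :=
  FractionRing (MvPolynomial (Fin 2) k ⧸ Ideal.span {p})

theorem algebraMap_curveFunctionField_eq_zero_iff {q : MvPolynomial (Fin 2) k} :
    algebraMap (MvPolynomial (Fin 2) k) (CurveFunctionField p) q = 0 ↔ p ∣ q := by
  rw [algebraMap_fractionRing_quotient_eq_zero_iff, Ideal.mem_span_singleton]

theorem trdeg_curveFunctionField_le_one [(Ideal.span {p}).IsPrime] (hp : p ≠ 0) :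
    Algebra.trdeg k (CurveFunctionField p) ≤ 1 := by
  have hlt := trdeg_quotient_lt (mt Ideal.span_singleton_eq_bot.mp hp)
  rw [Nat.card_fin, Nat.cast_succ, ← Cardinal.succ_natCast, Order.lt_succ_iff, Nat.cast_one] at hlt
  rwa [trdeg_fractionRing]

theorem exists_derivation_curveFunctionField [CharZero k] (hp : Irreducible p) :
    ∃ D : Derivation k (CurveFunctionField p) (CurveFunctionField p), D ≠ 0 ∧
      ∀ q, D (algebraMap (MvPolynomial (Fin 2) k) _ q) = algebraMap _ _ (hamiltonian p q) := by
  obtain ⟨D, hD⟩ := exists_derivation_fractionRing_quotient (hamiltonian p)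
    (hamiltonian_mem_span_singleton p)
  refine ⟨D, ?_, hD⟩
  rintro rfl
  have hdvd (q : MvPolynomial (Fin 2) k) : p ∣ hamiltonian p q := by
    rw [← algebraMap_curveFunctionField_eq_zero_iff, ← hD q, Derivation.zero_apply]
  obtain ⟨i, hi⟩ := exists_not_dvd_pderiv hp
  refine hi ?_
  fin_cases i
  · exact hamiltonian_X_one p ▸ hdvd (X 1)
  · exact dvd_neg.mp (hamiltonian_X_zero p ▸ hdvd (X 0))

theorem exists_derivation_constantField_eq_bot [IsAlgClosed k] [CharZero k]
    [hprime : (Ideal.span {p}).IsPrime] (hp : p ≠ 0) :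
    ∃ D : Derivation k (CurveFunctionField p) (CurveFunctionField p), constantField D = ⊥ ∧
      ∀ q, D (algebraMap (MvPolynomial (Fin 2) k) _ q) = algebraMap _ _ (hamiltonian p q) := by
  obtain ⟨D, hD0, hD⟩ :=
    exists_derivation_curveFunctionField ((Ideal.span_singleton_prime hp).mp hprime).irreducible
  exact ⟨D, constantField_eq_bot (trdeg_curveFunctionField_le_one hp) hD0, hD⟩

variable [IsAlgClosed k] [CharZero k]

theorem exists_dvd_line_of_dvd_curvatureNumerator (hp : Irreducible p)
    (hκ : p ∣ curvatureNumerator (hamiltonian p) (X 0) (X 1)) :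
    ∃ a b c : k, (a, b) ≠ (0, 0) ∧ p ∣ C a * X 0 + C b * X 1 - C c := by
  have := (Ideal.span_singleton_prime hp.ne_zero).mpr hp.prime
  obtain ⟨D, hconst, hD⟩ := exists_derivation_constantField_eq_bot hp.ne_zero
  rw [← algebraMap_curveFunctionField_eq_zero_iff, map_curvatureNumerator hD] at hκ
  obtain ⟨a, b, c, hab, habc⟩ := exists_linear_relation_of_curvatureNumerator_eq_zero hconst hκ
  refine ⟨a, b, c, hab, algebraMap_curveFunctionField_eq_zero_iff.mp ?_⟩
  simp only [map_sub, map_add, map_mul, ← algebraMap_eq, ← IsScalarTower.algebraMap_apply]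
  exact sub_eq_zero.mpr habc

theorem exists_dvd_circle_of_dvd_curvatureDerivNumerator (hp : Irreducible p)
    (hκ : ¬ p ∣ curvatureNumerator (hamiltonian p) (X 0) (X 1))
    (hκ' : p ∣ curvatureDerivNumerator (hamiltonian p) (X 0) (X 1)) :
    ∃ a b r : k, p ∣ (X 0 - C a) ^ 2 + (X 1 - C b) ^ 2 - C r := by
  have := (Ideal.span_singleton_prime hp.ne_zero).mpr hp.prime
  obtain ⟨D, hconst, hD⟩ := exists_derivation_constantField_eq_bot hp.ne_zero
  rw [← algebraMap_curveFunctionField_eq_zero_iff, map_curvatureNumerator hD] at hκ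
  rw [← algebraMap_curveFunctionField_eq_zero_iff, map_curvatureDerivNumerator hD] at hκ'
  obtain ⟨a, b, r, habr⟩ := exists_circle_relation_of_curvatureDerivNumerator_eq_zero hconst hκ hκ'
  refine ⟨a, b, r, algebraMap_curveFunctionField_eq_zero_iff.mp ?_⟩
  simp only [map_sub, map_add, map_pow, ← algebraMap_eq, ← IsScalarTower.algebraMap_apply]
  exact sub_eq_zero.mpr habr

end IrreducibleCurves

section LinesAndCircles

theorem constantCoeff_eq_zero_of_dvd {σ R : Type*} [CommSemiring R] {p q : MvPolynomial σ R}
    (hpq : p ∣ q) (hp : constantCoeff p = 0) : constantCoeff q = 0 :=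
  zero_dvd_iff.mp (hp ▸ map_dvd constantCoeff hpq)

theorem line_ne_zero {R : Type*} [CommSemiring R] {a b : R} (hab : (a, b) ≠ (0, 0)) :
    (C a * X 0 + C b * X 1 : MvPolynomial (Fin 2) R) ≠ 0 := by
  intro h
  have ha : a = 0 := by simpa using congrArg (eval ![1, 0]) h
  have hb : b = 0 := by simpa using congrArg (eval ![0, 1]) h
  exact hab (Prod.ext ha hb)

theorem totalDegree_line_le {R : Type*} [CommSemiring R] (a b : R) :
    (C a * X 0 + C b * X 1 : MvPolynomial (Fin 2) R).totalDegree ≤ 1 :=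
  ((isHomogeneous_C_mul_X a 0).add (isHomogeneous_C_mul_X b 1)).totalDegree_le

variable {R : Type*} [CommRing R]

theorem circle_ne_zero [Nontrivial R] (a b r : R) :
    ((X 0 - C a) ^ 2 + (X 1 - C b) ^ 2 - C r : MvPolynomial (Fin 2) R) ≠ 0 := by
  intro h
  let centred : Fin 2 → Polynomial R := ![Polynomial.X + Polynomial.C a, Polynomial.C b]
  have hX : Polynomial.X ^ 2 - Polynomial.C r = 0 := by
    simpa [centred] using congrArg (eval₂Hom Polynomial.C centred) h
  exact Polynomial.X_pow_sub_C_ne_zero two_pos r hX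

theorem totalDegree_circle_le [Nontrivial R] (a b r : R) :
    ((X 0 - C a) ^ 2 + (X 1 - C b) ^ 2 - C r : MvPolynomial (Fin 2) R).totalDegree ≤ 2 := by
  have hsq (i : Fin 2) (t : R) : ((X i - C t : MvPolynomial (Fin 2) R) ^ 2).totalDegree ≤ 2 :=
    calc _ ≤ 2 * (X i - C t).totalDegree := totalDegree_pow _ 2
      _ ≤ 2 * (X i).totalDegree := by gcongr; exact totalDegree_sub_C_le _ t
      _ = 2 := by rw [totalDegree_X]
  exact (totalDegree_sub_C_le _ r).trans
    ((totalDegree_add _ _).trans (max_le (hsq 0 a) (hsq 1 b)))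

theorem curvatureNumerator_hamiltonian_eq_zero {p : MvPolynomial (Fin 2) R}
    (hp : p.totalDegree ≤ 1) : curvatureNumerator (hamiltonian p) (X 0) (X 1) = 0 := by
  simp only [curvatureNumerator, hamiltonian_X_zero, hamiltonian_X_one, map_neg]
  simp only [hamiltonian_apply, pderiv_pderiv_eq_zero_of_totalDegree_le_one hp, mul_zero,
    sub_zero, neg_zero, zero_mul]

variable {k : Type*} [Field k] [IsAlgClosed k] [CharZero k] {p : MvPolynomial (Fin 2) k}

theorem exists_line_dvd_of_dvd_curvatureNumerator (hp : Irreducible p)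
    (hp0 : constantCoeff p = 0) (hκ : p ∣ curvatureNumerator (hamiltonian p) (X 0) (X 1)) :
    ∃ a b : k, (a, b) ≠ (0, 0) ∧ C a * X 0 + C b * X 1 ∣ p := by
  obtain ⟨a, b, c, hab, hdvd⟩ := exists_dvd_line_of_dvd_curvatureNumerator hp hκ
  have hc : c = 0 := by simpa using constantCoeff_eq_zero_of_dvd hdvd hp0
  rw [hc, C_0, sub_zero] at hdvd
  have hdeg : 1 ≤ p.totalDegree := Nat.one_le_iff_ne_zero.mpr fun h ↦
    hp.not_isUnit (isUnit_of_totalDegree_eq_zero hp.ne_zero h)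
  exact ⟨a, b, hab,
    dvd_of_dvd_of_totalDegree_le hdvd (line_ne_zero hab) ((totalDegree_line_le a b).trans hdeg)⟩

theorem exists_circle_dvd_of_dvd_curvatureDerivNumerator (hp : Irreducible p)
    (hp0 : constantCoeff p = 0) (hκ : ¬ p ∣ curvatureNumerator (hamiltonian p) (X 0) (X 1))
    (hκ' : p ∣ curvatureDerivNumerator (hamiltonian p) (X 0) (X 1)) :
    ∃ a b c : k, a ^ 2 + b ^ 2 = c ^ 2 ∧ (X 0 - C a) ^ 2 + (X 1 - C b) ^ 2 - C c ^ 2 ∣ p := by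
  obtain ⟨a, b, r, hdvd⟩ := exists_dvd_circle_of_dvd_curvatureDerivNumerator hp hκ hκ'
  have hr : a ^ 2 + b ^ 2 = r :=
    sub_eq_zero.mp (by simpa using constantCoeff_eq_zero_of_dvd hdvd hp0)
  have hdeg : 2 ≤ p.totalDegree := by
    by_contra! hlt
    exact hκ (curvatureNumerator_hamiltonian_eq_zero (Nat.le_of_lt_succ hlt) ▸ dvd_zero p)
  obtain ⟨c, rfl⟩ := IsAlgClosed.exists_pow_nat_eq r two_pos
  refine ⟨a, b, c, hr, ?_⟩
  rw [← C_pow]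
  exact dvd_of_dvd_of_totalDegree_le hdvd (circle_ne_zero a b _)
    ((totalDegree_circle_le a b _).trans hdeg)

theorem exists_line_or_circle_dvd_of_dvd_vert {p : MvPolynomial (Fin 2) ℂ} (hp : Irreducible p)
    (hp0 : constantCoeff p = 0) (hvert : p ∣ vert p) :
    (∃ a b : ℂ, (a, b) ≠ (0, 0) ∧ C a * X 0 + C b * X 1 ∣ p) ∨
      ∃ a b c : ℂ, a ^ 2 + b ^ 2 = c ^ 2 ∧
        (X 0 - C a) ^ 2 + (X 1 - C b) ^ 2 - C c ^ 2 ∣ p := by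
  rw [vert_eq_curvatureDerivNumerator] at hvert
  by_cases hκ : p ∣ curvatureNumerator (hamiltonian p) (X 0) (X 1)
  · exact .inl (exists_line_dvd_of_dvd_curvatureNumerator hp hp0 hκ)
  · exact .inr (exists_circle_dvd_of_dvd_curvatureDerivNumerator hp hp0 hκ hvert)

end LinesAndCircles

end

/-- **Theorem 3.2(7), vertex part.** For a squarefree `f`, the number of vertices
`V_f` concentrated at the origin is infinite if and only if the germ of `f = 0` at the
origin contains the germ of a line or of a complex circle through the origin, i.e.
either some linear polynomial `a·X + b·Y`, `(a,b) ≠ (0,0)`, divides `f`, or some circle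
polynomial `(X − a)² + (Y − b)² − c²` with `a² + b² = c²` divides `f`. -/
theorem vertex_number_infinite_iff_line_or_circle_component
    (f : MvPolynomial (Fin 2) ℂ) (hf : Squarefree f) :
    ¬ FiniteDimensional ℂ
        (MvPowerSeries (Fin 2) ℂ ⧸ Ideal.span {ι f, ι (vert f)}) ↔
      (∃ a b : ℂ, (a, b) ≠ (0, 0) ∧
        (MvPolynomial.C a * MvPolynomial.X 0 + MvPolynomial.C b * MvPolynomial.X 1) ∣ f) ∨
      (∃ a b c : ℂ, a ^ 2 + b ^ 2 = c ^ 2 ∧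
        ((MvPolynomial.X 0 - MvPolynomial.C a) ^ 2 +
          (MvPolynomial.X 1 - MvPolynomial.C b) ^ 2 - MvPolynomial.C c ^ 2) ∣ f) := by
  rw [ι_apply, ι_apply]
  constructor
  · intro hinf
    obtain ⟨p, hp, hp0, hpf, hpv⟩ := exists_irreducible_dvd_of_not_finite_quotient hf.ne_zero hinf
    have hpp : p ∣ vert p := dvd_vert_self_of_dvd_vert hf hp hpf hpv
    obtain ⟨a, b, hab, hline⟩ | ⟨a, b, c, habc, hcircle⟩ :=
      exists_line_or_circle_dvd_of_dvd_vert hp hp0 hpp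
    · exact .inl ⟨a, b, hab, hline.trans hpf⟩
    · exact .inr ⟨a, b, c, habc, hcircle.trans hpf⟩
  · rintro (⟨a, b, -, hline⟩ | ⟨a, b, c, habc, hcircle⟩)
    · exact not_finite_quotient_span_pair_of_dvd (by simp) hline
        (dvd_vert_of_dvd hline (vert_line a b))
    · rw [← C_pow] at hcircle
      exact not_finite_quotient_span_pair_of_dvd (by simp [habc]) hcircle
        (dvd_vert_of_dvd hcircle (vert_circle a b (c ^ 2)))
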